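/- arXiv:1007.1232 — 4 statements merged into one kernel-verified Lean document; each statement's English description precedes it below -/
import Mathlib

section
/- The Csirmaz access structure Γ^(n) is not self-dual: for every i with 1 < i ≤ 2^k − 2, the set A_i ∪ B_{i−1} is unauthorized (A_i ∪ B_{i−1} ∉ Γ^(n)) and its complement P \ (A_i ∪ B_{i−1}) = (A \ A_i) ∪ (B \ B_{i−1}) is also unauthorized (P \ (A_i ∪ B_{i−1}) ∉ Γ^(n)). -/
/-- The data of a Csirmaz access structure on `P = {1, ..., n}` with parameter `k`:
`k` is the largest integer with `n ≥ 2^k - 2 + k`; `A ⊆ P` has `k` elements;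
`Ai 0, Ai 1, ..., Ai (2^k - 2)` enumerates all nonempty subsets of `A` in order of
non-increasing cardinality; `Bi 0 = ∅ ⊆ Bi 1 ⊆ ... ⊆ Bi (2^k - 2) = P \ A` is a
nested chain with `|Bi i| = i` for `i < 2^k - 2` (i.e. `Bi i = {b_1, ..., b_i}`). -/
structure CsirmazSetup (n k : ℕ) (A : Finset ℕ) (Ai Bi : ℕ → Finset ℕ) : Prop where
  hn : 4 ≤ n
  hk : 2 ^ k - 2 + k ≤ n
  hk_max : ∀ k' : ℕ, 2 ^ k' - 2 + k' ≤ n → k' ≤ k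
  hA_sub : A ⊆ Finset.Icc 1 n
  hA_card : A.card = k
  hA0 : Ai 0 = A
  hAi_sub : ∀ i ≤ 2 ^ k - 2, Ai i ⊆ A
  hAi_ne : ∀ i ≤ 2 ^ k - 2, (Ai i).Nonempty
  hAi_inj : ∀ i ≤ 2 ^ k - 2, ∀ j ≤ 2 ^ k - 2, Ai i = Ai j → i = j
  hAi_all : ∀ X ⊆ A, X.Nonempty → ∃ i ≤ 2 ^ k - 2, Ai i = X
  hAi_card_anti : ∀ i ≤ 2 ^ k - 2, ∀ j ≤ 2 ^ k - 2, i ≤ j → (Ai j).card ≤ (Ai i).card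
  hB0 : Bi 0 = ∅
  hB_top : Bi (2 ^ k - 2) = Finset.Icc 1 n \ A
  hB_mono : ∀ i j : ℕ, i ≤ j → j ≤ 2 ^ k - 2 → Bi i ⊆ Bi j
  hB_card : ∀ i < 2 ^ k - 2, (Bi i).card = i
  hB_range : ∀ i ≤ 2 ^ k - 2, Bi i ⊆ Finset.Icc 1 n \ A

/-- The Csirmaz access structure `Γ^(n)`: the monotone closure (inside `2^P`) of the
minimal sets `M_i = Ai i ∪ Bi i`, `0 ≤ i ≤ 2^k - 2`. -/
def CsirmazGamma (n k : ℕ) (Ai Bi : ℕ → Finset ℕ) : Set (Finset ℕ) :=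
  {Z | Z ⊆ Finset.Icc 1 n ∧ ∃ i ≤ 2 ^ k - 2, Ai i ∪ Bi i ⊆ Z}

/-!
A minimal set `A_j ∪ B_j` inside `A_i ∪ B_{i-1}` would give both `A_j ⊆ A_i` and `B_j ⊆ B_{i-1}`,
as the `A_i` and `B_i` live in disjoint parts of `P`. The first fails for `j < i`, since the `A_i`
are listed by non-increasing cardinality, and the second for `j ≥ i`, since the `B_i` grow strictly.
No minimal set lies in the complement either, because each one meets `A_i ∪ B_{i-1}`:
`A_0 = A` meets `A_i`, and for `j > 0` both `B_j` and `B_{i-1}` contain `B_1 ≠ ∅`.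
-/

section BooleanAlgebra

variable {β : Type*} {a b x y : β}

lemma sup_le_sup_iff_of_disjoint [DistribLattice β] [OrderBot β]
    (hay : Disjoint a y) (hbx : Disjoint b x) : a ⊔ b ≤ x ⊔ y ↔ a ≤ x ∧ b ≤ y := by
  refine ⟨fun h => ⟨?_, ?_⟩, fun h => sup_le_sup h.1 h.2⟩
  · exact hay.left_le_of_le_sup_right (le_sup_left.trans h)
  · exact hbx.left_le_of_le_sup_left (le_sup_right.trans h)

lemma sup_sdiff_sup_of_disjoint [GeneralizedBooleanAlgebra β]
    (hay : Disjoint a y) (hbx : Disjoint b x) : (a ⊔ b) \ (x ⊔ y) = a \ x ⊔ b \ y :=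
  calc (a ⊔ b) \ (x ⊔ y) = a \ (y ⊔ x) ⊔ b \ (x ⊔ y) := by rw [sup_sdiff, sup_comm y x]
    _ = (a \ y) \ x ⊔ (b \ x) \ y := by rw [sdiff_sdiff_left, sdiff_sdiff_left]
    _ = a \ x ⊔ b \ y := by rw [hay.sdiff_eq_left, hbx.sdiff_eq_left]

end BooleanAlgebra

section AccessStructure

variable {α : Type*} [DecidableEq α] {P A Z : Finset α} {m i : ℕ} {Ai Bi M : ℕ → Finset α}

/-- The access structure on `P` generated by `M 0, …, M m`: the subsets of `P` containing some
`M i`. -/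
def generatedAccess (P : Finset α) (m : ℕ) (M : ℕ → Finset α) : Set (Finset α) :=
  {Z | Z ⊆ P ∧ ∃ i ≤ m, M i ⊆ Z}

/-- Self-duality of an access structure on `P`: exactly one of any two complementary subsets of `P`
is authorized. -/
def IsSelfDualOn (P : Finset α) (Γ : Set (Finset α)) : Prop :=
  ∀ Z ⊆ P, (Z ∈ Γ ↔ P \ Z ∉ Γ)

/-- The pattern of the Csirmaz sequences `A_i` and `B_i` that defeats self-duality, for an arbitrary
index range `0, …, m`: the `A_i` are nonempty subsets of `A = A_0`, none contained in a later one,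
and the `B_i` increase strictly inside `P \ A`. -/
structure CsirmazFamily (P A : Finset α) (m : ℕ) (Ai Bi : ℕ → Finset α) : Prop where
  subset_ground : A ⊆ P
  A_zero : Ai 0 = A
  A_subset : ∀ i ≤ m, Ai i ⊆ A
  A_nonempty : ∀ i ≤ m, (Ai i).Nonempty
  A_not_subset : ∀ i j, i < j → j ≤ m → ¬ Ai i ⊆ Ai j
  B_subset : ∀ i ≤ m, Bi i ⊆ P \ A
  B_ssubset : ∀ i j, i < j → j ≤ m → Bi i ⊂ Bi j

lemma not_isSelfDualOn_of_notMem {Γ : Set (Finset α)} (hZP : Z ⊆ P) (hZ : Z ∉ Γ) (hZc : P \ Z ∉ Γ) :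
    ¬ IsSelfDualOn P Γ :=
  fun hdual => hZ ((hdual Z hZP).2 hZc)

lemma sdiff_notMem_generatedAccess (h : ∀ i ≤ m, ¬ Disjoint (M i) Z) :
    P \ Z ∉ generatedAccess P m M := by
  rintro ⟨-, i, hi, hMi⟩
  exact h i hi (Finset.subset_sdiff.1 hMi).2

namespace CsirmazFamily

variable (h : CsirmazFamily P A m Ai Bi)
include h

lemma disjoint_A_B {j : ℕ} (hi : i ≤ m) (hj : j ≤ m) : Disjoint (Ai i) (Bi j) :=
  (Finset.subset_sdiff.1 (h.B_subset j hj)).2.symm.mono_left (h.A_subset i hi)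

lemma union_subset_ground {j : ℕ} (hi : i ≤ m) (hj : j ≤ m) : Ai i ∪ Bi j ⊆ P :=
  Finset.union_subset ((h.A_subset i hi).trans h.subset_ground)
    ((h.B_subset j hj).trans Finset.sdiff_subset)

lemma B_subset_B {j l : ℕ} (hjl : j ≤ l) (hl : l ≤ m) : Bi j ⊆ Bi l := by
  obtain rfl | hlt := hjl.eq_or_lt
  · exact Finset.Subset.rfl
  · exact (h.B_ssubset j l hlt hl).subset

lemma not_disjoint_B {j l : ℕ} (hj : 0 < j) (hjm : j ≤ m) (hl : 0 < l) (hlm : l ≤ m) :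
    ¬ Disjoint (Bi j) (Bi l) := by
  obtain ⟨b, hb, -⟩ := Finset.exists_of_ssubset (h.B_ssubset 0 1 one_pos (hj.trans_le hjm))
  exact Finset.not_disjoint_iff.2 ⟨b, h.B_subset_B hj hjm hb, h.B_subset_B hl hlm hb⟩

lemma union_notMem (hi₀ : 0 < i) (hi : i ≤ m) :
    Ai i ∪ Bi (i - 1) ∉ generatedAccess P m fun j => Ai j ∪ Bi j := by
  rintro ⟨-, j, hj, hsub⟩
  have hi' : i - 1 ≤ m := (Nat.sub_le i 1).trans hi
  obtain ⟨hA, hB⟩ : Ai j ⊆ Ai i ∧ Bi j ⊆ Bi (i - 1) :=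
    (sup_le_sup_iff_of_disjoint (h.disjoint_A_B hj hi') (h.disjoint_A_B hi hj).symm).1 hsub
  obtain hji | hij := lt_or_ge j i
  · exact h.A_not_subset j i hji hi hA
  · exact (h.B_ssubset (i - 1) j (by lia) hj).not_subset hB

lemma not_disjoint_union {j : ℕ} (hi₁ : 1 < i) (hi : i ≤ m) (hj : j ≤ m) :
    ¬ Disjoint (Ai j ∪ Bi j) (Ai i ∪ Bi (i - 1)) := by
  intro hdisj
  obtain rfl | hj₀ := j.eq_zero_or_pos
  · have hA : Ai i ⊆ Ai 0 := h.A_zero ▸ h.A_subset i hi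
    obtain ⟨a, ha⟩ := h.A_nonempty i hi
    exact Finset.disjoint_left.1 hdisj (Finset.mem_union_left _ (hA ha))
      (Finset.mem_union_left _ ha)
  · exact h.not_disjoint_B hj₀ hj (Nat.sub_pos_of_lt hi₁) ((Nat.sub_le i 1).trans hi)
      (hdisj.mono Finset.subset_union_right Finset.subset_union_right)

lemma sdiff_union_notMem (hi₁ : 1 < i) (hi : i ≤ m) :
    P \ (Ai i ∪ Bi (i - 1)) ∉ generatedAccess P m fun j => Ai j ∪ Bi j :=
  sdiff_notMem_generatedAccess fun _ hj => h.not_disjoint_union hi₁ hi hj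

lemma sdiff_union_eq {j : ℕ} (hi : i ≤ m) (hj : j ≤ m) :
    P \ (Ai i ∪ Bi j) = (A \ Ai i) ∪ ((P \ A) \ Bi j) := by
  have hAB : Disjoint A (Bi j) := (Finset.subset_sdiff.1 (h.B_subset j hj)).2.symm
  have hBA : Disjoint (P \ A) (Ai i) := Finset.sdiff_disjoint.mono_right (h.A_subset i hi)
  calc P \ (Ai i ∪ Bi j) = (A ∪ P \ A) \ (Ai i ∪ Bi j) := by
        rw [Finset.union_sdiff_of_subset h.subset_ground]
    _ = (A \ Ai i) ∪ ((P \ A) \ Bi j) := sup_sdiff_sup_of_disjoint hAB hBA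

end CsirmazFamily

theorem csirmaz_not_self_dual_general (h : CsirmazFamily P A m Ai Bi) (hm : 2 ≤ m) :
    (∀ i : ℕ, 1 < i → i ≤ m →
      Ai i ∪ Bi (i - 1) ∉ generatedAccess P m (fun j => Ai j ∪ Bi j) ∧
      P \ (Ai i ∪ Bi (i - 1)) = (A \ Ai i) ∪ ((P \ A) \ Bi (i - 1)) ∧
      P \ (Ai i ∪ Bi (i - 1)) ∉ generatedAccess P m (fun j => Ai j ∪ Bi j)) ∧
    ¬ IsSelfDualOn P (generatedAccess P m fun j => Ai j ∪ Bi j) :=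
  ⟨fun i hi₁ hi => ⟨h.union_notMem (one_pos.trans hi₁) hi,
      h.sdiff_union_eq hi ((Nat.sub_le i 1).trans hi), h.sdiff_union_notMem hi₁ hi⟩,
    not_isSelfDualOn_of_notMem (h.union_subset_ground hm (one_le_two.trans hm))
      (h.union_notMem two_pos hm) (h.sdiff_union_notMem one_lt_two hm)⟩

end AccessStructure

namespace CsirmazSetup

variable {n k : ℕ} {A : Finset ℕ} {Ai Bi : ℕ → Finset ℕ} (h : CsirmazSetup n k A Ai Bi)
include h

lemma two_le_two_pow_sub_two : 2 ≤ 2 ^ k - 2 := by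
  have hk : 2 ≤ k := h.hk_max 2 h.hn
  have hpow : 2 ^ 2 ≤ 2 ^ k := Nat.pow_le_pow_right two_pos hk
  lia

lemma card_B_top : (Bi (2 ^ k - 2)).card = n - k := by
  rw [h.hB_top, Finset.card_sdiff_of_subset h.hA_sub, h.hA_card, Nat.card_Icc, Nat.add_sub_cancel]

lemma le_card_B {j : ℕ} (hj : j ≤ 2 ^ k - 2) : j ≤ (Bi j).card := by
  obtain rfl | hlt := hj.eq_or_lt
  · exact h.card_B_top ▸ Nat.le_sub_of_add_le h.hk
  · exact (h.hB_card j hlt).ge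

lemma B_ssubset {i j : ℕ} (hij : i < j) (hj : j ≤ 2 ^ k - 2) : Bi i ⊂ Bi j := by
  refine (h.hB_mono i j hij.le hj).ssubset_of_not_subset fun hsub => hij.not_ge ?_
  calc j ≤ (Bi j).card := h.le_card_B hj
    _ ≤ (Bi i).card := Finset.card_le_card hsub
    _ = i := h.hB_card i (hij.trans_le hj)

lemma A_not_subset {i j : ℕ} (hij : i < j) (hj : j ≤ 2 ^ k - 2) : ¬ Ai i ⊆ Ai j := by
  intro hsub
  have hi : i ≤ 2 ^ k - 2 := hij.le.trans hj
  have hcard : (Ai j).card ≤ (Ai i).card := h.hAi_card_anti i hi j hj hij.le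
  exact hij.ne (h.hAi_inj i hi j hj (Finset.eq_of_subset_of_card_le hsub hcard))

lemma csirmazFamily : CsirmazFamily (Finset.Icc 1 n) A (2 ^ k - 2) Ai Bi where
  subset_ground := h.hA_sub
  A_zero := h.hA0
  A_subset := h.hAi_sub
  A_nonempty := h.hAi_ne
  A_not_subset _ _ := h.A_not_subset
  B_subset := h.hB_range
  B_ssubset _ _ := h.B_ssubset

end CsirmazSetup

/-- `Γ^(n)` is not self-dual: for every `1 < i ≤ 2^k - 2`, the set
`A_i ∪ B_{i-1}` is unauthorized, its complement equals `(A \ A_i) ∪ (B \ B_{i-1})`,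
and the complement is also unauthorized. -/
theorem csirmaz_not_self_dual (n k : ℕ) (A : Finset ℕ) (Ai Bi : ℕ → Finset ℕ)
    (h : CsirmazSetup n k A Ai Bi) :
    (∀ i : ℕ, 1 < i → i ≤ 2 ^ k - 2 →
      Ai i ∪ Bi (i - 1) ∉ CsirmazGamma n k Ai Bi ∧
      Finset.Icc 1 n \ (Ai i ∪ Bi (i - 1)) =
        (A \ Ai i) ∪ ((Finset.Icc 1 n \ A) \ Bi (i - 1)) ∧
      Finset.Icc 1 n \ (Ai i ∪ Bi (i - 1)) ∉ CsirmazGamma n k Ai Bi) ∧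
    ¬ (∀ Z ⊆ Finset.Icc 1 n,
        (Z ∈ CsirmazGamma n k Ai Bi ↔ Finset.Icc 1 n \ Z ∉ CsirmazGamma n k Ai Bi)) :=
  csirmaz_not_self_dual_general h.csirmazFamily h.two_le_two_pow_sub_two
end

section
/- For every i with 0 ≤ i ≤ 2^k − 3, the set A_{i+1} ∪ B_i is unauthorized in the Csirmaz access structure: no minimal authorized set M_j (0 ≤ j ≤ 2^k − 2) is contained in A_{i+1} ∪ B_i, i.e. A_{i+1} ∪ B_i ∉ Γ^(n). (Equivalently, with X_i = A ∪ B_i and Y_i = A_{i+1} ∪ B_{i+1}, both X_i and Y_i are authorized while X_i ∩ Y_i = A_{i+1} ∪ B_i is unauthorized.) -/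
/-!
Since the `A`-parts are disjoint from the `B`-parts, `M_j ⊆ A_l ∪ B_i` splits into `A_j ⊆ A_l` and
`B_j ⊆ B_i`. The `B_i` strictly increase, so the second inclusion forces `j ≤ i`; no `A_j` lies in
a later `A_l`, so the first forces `l ≤ j`. This is impossible when `i < l`.
-/

/-- The access structure on the set of participants `P` generated by a family `S` of authorized
sets: its monotone closure inside the subsets of `P`. Sets of participants are taken to be elements
of an arbitrary order, inclusion being `≤`. -/
def accessStructure {α : Type*} [Preorder α] (P : α) (S : Set α) : Set α :=
  Set.Iic P ∩ upperClosure S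

section DistribLattice

variable {α ι : Type*} [DistribLattice α] [OrderBot α] [LinearOrder ι]

theorem sup_le_sup_iff_of_disjoint_s3 {a b c d : α} (had : Disjoint a d) (hbc : Disjoint b c) :
    a ⊔ b ≤ c ⊔ d ↔ a ≤ c ∧ b ≤ d := by
  refine ⟨fun h ↦ ⟨?_, ?_⟩, fun h ↦ sup_le_sup h.1 h.2⟩
  · exact had.left_le_of_le_sup_right (le_sup_left.trans h)
  · exact hbc.left_le_of_le_sup_left (le_sup_right.trans h)

theorem sup_inf_sup_eq_of_disjoint {a b c d : α} (hca : c ≤ a) (hbd : b ≤ d)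
    (had : Disjoint a d) : (a ⊔ b) ⊓ (c ⊔ d) = c ⊔ b := by
  rw [inf_sup_left, inf_eq_right.2 (hca.trans le_sup_left), inf_sup_right, had.eq_bot,
    bot_sup_eq, inf_eq_left.2 hbd]

theorem not_sup_le_sup_of_lt {s : Set ι} {A B : ι → α}
    (hA : ∀ i ∈ s, ∀ j ∈ s, i < j → ¬ A i ≤ A j) (hB : StrictMonoOn B s)
    (hAB : ∀ i ∈ s, ∀ j ∈ s, Disjoint (A i) (B j))
    {i j l : ι} (hi : i ∈ s) (hj : j ∈ s) (hl : l ∈ s) (hil : i < l) :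
    ¬ A j ⊔ B j ≤ A l ⊔ B i := by
  rw [sup_le_sup_iff_of_disjoint_s3 (hAB j hj i hi) (hAB l hl j hj).symm]
  rintro ⟨hA_le, hB_le⟩
  have hji : j ≤ i := (hB.le_iff_le hj hi).1 hB_le
  exact hA j hj l hl (hji.trans_lt hil) hA_le

theorem csirmaz_intersection_unauthorized_general {P : α} {s : Set ι} {o : ι} {A B : ι → α}
    (ho : IsLeast s o) (hP : ∀ i ∈ s, A i ⊔ B i ≤ P) (hAo : ∀ i ∈ s, A i ≤ A o)
    (hA : ∀ i ∈ s, ∀ j ∈ s, i < j → ¬ A i ≤ A j) (hB : StrictMonoOn B s)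
    (hAB : ∀ i ∈ s, Disjoint (A o) (B i)) {i l : ι} (hi : i ∈ s) (hl : l ∈ s) (hil : i < l) :
    A o ⊔ B i ∈ accessStructure P ((A ⊔ B) '' s) ∧
      A l ⊔ B l ∈ accessStructure P ((A ⊔ B) '' s) ∧
      (A o ⊔ B i) ⊓ (A l ⊔ B l) = A l ⊔ B i ∧
      A l ⊔ B i ∉ accessStructure P ((A ⊔ B) '' s) := by
  have hB_mono : MonotoneOn B s := hB.monotoneOn
  have hX : A o ⊔ B i ≤ P := sup_le (le_sup_left.trans (hP o ho.1)) (le_sup_right.trans (hP i hi))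
  have hMo : A o ⊔ B o ≤ A o ⊔ B i := sup_le_sup_left (hB_mono ho.1 hi (ho.2 hi)) _
  refine ⟨⟨hX, A o ⊔ B o, Set.mem_image_of_mem (A ⊔ B) ho.1, hMo⟩,
    ⟨hP l hl, subset_upperClosure (Set.mem_image_of_mem (A ⊔ B) hl)⟩,
    sup_inf_sup_eq_of_disjoint (hAo l hl) (hB_mono hi hl hil.le) (hAB l hl), ?_⟩
  rintro ⟨-, -, ⟨j, hj, rfl⟩, hMj⟩
  have hAB' : ∀ i ∈ s, ∀ j ∈ s, Disjoint (A i) (B j) := fun i hi j hj ↦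
    (hAB j hj).mono_left (hAo i hi)
  exact not_sup_le_sup_of_lt hA hB hAB' hi hj hl hil hMj

end DistribLattice

theorem not_subset_of_antitoneOn_card {α ι : Type*} [Preorder ι] {s : Set ι} {F : ι → Finset α}
    (hcard : AntitoneOn (fun i ↦ (F i).card) s) (hinj : Set.InjOn F s) {i j : ι} (hi : i ∈ s)
    (hj : j ∈ s) (hij : i < j) : ¬ F i ⊆ F j := fun hsub ↦
  hij.ne (hinj hi hj (Finset.eq_of_subset_of_card_le hsub (hcard hi hj hij.le)))

theorem csirmazGamma_eq_accessStructure (n k : ℕ) (Ai Bi : ℕ → Finset ℕ) :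
    CsirmazGamma n k Ai Bi =
      accessStructure (Finset.Icc 1 n) ((Ai ⊔ Bi) '' Set.Iic (2 ^ k - 2)) := by
  ext Z
  simp [CsirmazGamma, accessStructure]

namespace CsirmazSetup

variable {n k : ℕ} {A : Finset ℕ} {Ai Bi : ℕ → Finset ℕ}

theorem union_subset_Icc (h : CsirmazSetup n k A Ai Bi) {i : ℕ} (hi : i ≤ 2 ^ k - 2) :
    Ai i ∪ Bi i ⊆ Finset.Icc 1 n :=
  Finset.union_subset ((h.hAi_sub i hi).trans h.hA_sub)
    ((h.hB_range i hi).trans Finset.sdiff_subset)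

theorem not_Ai_subset_of_lt (h : CsirmazSetup n k A Ai Bi) {i j : ℕ} (hj : j ≤ 2 ^ k - 2)
    (hij : i < j) : ¬ Ai i ⊆ Ai j :=
  not_subset_of_antitoneOn_card (s := Set.Iic (2 ^ k - 2))
    (fun i hi j hj hij ↦ h.hAi_card_anti i hi j hj hij) (fun i hi j hj ↦ h.hAi_inj i hi j hj)
    (hij.le.trans hj) hj hij

theorem disjoint_Bi (h : CsirmazSetup n k A Ai Bi) {i : ℕ} (hi : i ≤ 2 ^ k - 2) :
    Disjoint A (Bi i) :=
  Finset.disjoint_sdiff.mono_right (h.hB_range i hi)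

theorem le_card_Bi (h : CsirmazSetup n k A Ai Bi) {i : ℕ} (hi : i ≤ 2 ^ k - 2) :
    i ≤ (Bi i).card := by
  obtain hlt | rfl := hi.lt_or_eq
  · exact (h.hB_card i hlt).ge
  · rw [h.hB_top, Finset.card_sdiff_of_subset h.hA_sub, h.hA_card, Nat.card_Icc,
      Nat.add_sub_cancel]
    exact Nat.le_sub_of_add_le h.hk

theorem strictMonoOn_Bi (h : CsirmazSetup n k A Ai Bi) : StrictMonoOn Bi (Set.Iic (2 ^ k - 2)) := by
  intro i _ j hj hij
  refine (h.hB_mono i j hij.le hj).ssubset_of_not_subset fun hsub ↦ hij.not_ge ?_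
  calc
    j ≤ (Bi j).card := h.le_card_Bi hj
    _ ≤ (Bi i).card := Finset.card_le_card hsub
    _ = i := h.hB_card i (hij.trans_le hj)

end CsirmazSetup

/-- for `0 ≤ i ≤ 2^k - 3`, the sets `X_i = A ∪ B_i` and
`Y_i = A_{i+1} ∪ B_{i+1}` are authorized, while their intersection
`X_i ∩ Y_i = A_{i+1} ∪ B_i` is unauthorized. -/
theorem csirmaz_intersection_unauthorized (n k : ℕ) (A : Finset ℕ)
    (Ai Bi : ℕ → Finset ℕ) (h : CsirmazSetup n k A Ai Bi) :
    ∀ i : ℕ, i + 1 ≤ 2 ^ k - 2 →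
      A ∪ Bi i ∈ CsirmazGamma n k Ai Bi ∧
      Ai (i + 1) ∪ Bi (i + 1) ∈ CsirmazGamma n k Ai Bi ∧
      (A ∪ Bi i) ∩ (Ai (i + 1) ∪ Bi (i + 1)) = Ai (i + 1) ∪ Bi i ∧
      Ai (i + 1) ∪ Bi i ∉ CsirmazGamma n k Ai Bi := by
  intro i hi
  obtain rfl := h.hA0
  rw [csirmazGamma_eq_accessStructure]
  exact csirmaz_intersection_unauthorized_general (s := Set.Iic (2 ^ k - 2)) (A := Ai)
    ⟨Nat.zero_le _, fun j _ ↦ j.zero_le⟩ (fun _ ↦ h.union_subset_Icc) h.hAi_sub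
    (fun _ _ _ ↦ h.not_Ai_subset_of_lt) h.strictMonoOn_Bi (fun _ ↦ h.disjoint_Bi)
    (Nat.le_of_succ_le hi) hi i.lt_succ_self
end

section
/- Let S be an entropy function realizing a quantum access structure Γ on player set Q with secret size c (so the complement of every authorized set is unauthorized). Then for every authorized set A ∈ Γ, writing Ā = Q \ A: (1) S(A) = (1/2)·I(A : Ā) + c; (2) S(Ā) = (1/2)·I(A : Ā); and (3) S(A) − S(Ā) = c. -/
/-- Information-theoretic model of a perfect quantum secret sharing scheme
(Imai et al.): an entropy function `S` on subsets of `Q ∪ {R}` realizing the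
access structure `Γ` on the player set `Q` with secret size `c > 0`,
where `R ∉ Q` is the reference symbol.  The mutual information of disjoint
`X, Y` is `I(X : Y) = S X + S Y - S (X ∪ Y)`. -/
structure EntropyFn (Q : Finset ℕ) (R : ℕ) (Γ : Set (Finset ℕ)) (c : ℝ)
    (S : Finset ℕ → ℝ) : Prop where
  c_pos : 0 < c
  empty : S ∅ = 0
  nonneg : ∀ X : Finset ℕ, 0 ≤ S X
  submod : ∀ X Y : Finset ℕ, X ⊆ Q ∪ {R} → Y ⊆ Q ∪ {R} →
    S X + S Y ≥ S (X ∪ Y) + S (X ∩ Y)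
  purity : ∀ X : Finset ℕ, X ⊆ Q ∪ {R} → S X = S ((Q ∪ {R}) \ X)
  ref : S {R} = c
  recov : ∀ A ∈ Γ, S A + S {R} - S (A ∪ {R}) = 2 * c
  secrecy : ∀ A : Finset ℕ, A ⊆ Q → A ∉ Γ → S A + S {R} - S (A ∪ {R}) = 0

/-!
The players and the reference `R` are jointly in a pure state, so the three parts `A`, `Ā` and `R`
satisfy `I(A : R) = S(A) + S(R) - S(Ā)` and `I(A : Ā) = S(A) + S(Ā) - S(R)`. Recoverability makes
the first quantity equal to `2 S(R)`, hence `S(A) = S(Ā) + S(R)`, and the second becomes `2 S(Ā)`.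
-/

section Purity

variable {α M : Type*} [DecidableEq α] {S : Finset α → M} {X Y Z : Finset α}

/-- The set function `S` is pure on the total system `E`, as the entropy of a pure state on `E` is:
complementary subsystems of `E` have the same value. -/
def IsPureOn (S : Finset α → M) (E : Finset α) : Prop :=
  ∀ X ⊆ E, S X = S (E \ X)

theorem IsPureOn.apply_eq_of_disjoint (hS : IsPureOn S (X ∪ Y)) (hXY : Disjoint X Y) :
    S X = S Y := by
  rw [hS X Finset.subset_union_left, Finset.union_sdiff_cancel_left hXY]

variable [AddCommGroup M]

/-- The mutual information `I(X : Y)` of an arbitrary set function `S`, meant for disjoint `X` and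
`Y`. -/
def mutualInfo (S : Finset α → M) (X Y : Finset α) : M :=
  S X + S Y - S (X ∪ Y)

namespace IsPureOn

theorem mutualInfo_eq_add_sub (hS : IsPureOn S (X ∪ Y ∪ Z)) (h : Disjoint (X ∪ Y) Z) :
    mutualInfo S X Y = S X + S Y - S Z := by
  rw [mutualInfo, hS.apply_eq_of_disjoint h]

theorem apply_eq_add_of_mutualInfo_eq_two_nsmul (hS : IsPureOn S (X ∪ Y ∪ Z))
    (h : Disjoint (X ∪ Z) Y) (hXZ : mutualInfo S X Z = 2 • S Z) : S X = S Y + S Z := by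
  rw [Finset.union_right_comm] at hS
  rw [hS.mutualInfo_eq_add_sub h, two_nsmul, sub_eq_iff_eq_add] at hXZ
  rw [← add_left_inj (S Z), hXZ]
  abel

theorem mutualInfo_eq_two_nsmul_of_apply_eq_add (hS : IsPureOn S (X ∪ Y ∪ Z))
    (h : Disjoint (X ∪ Y) Z) (hX : S X = S Y + S Z) : mutualInfo S X Y = 2 • S Y := by
  rw [hS.mutualInfo_eq_add_sub h, hX]
  abel

end IsPureOn

end Purity

theorem entropy_complement_relations_general {α K : Type*} [DecidableEq α] [Field K]
    [NeZero (2 : K)] {S : Finset α → K} {Q C A : Finset α} (hQC : Disjoint Q C)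
    (hS : IsPureOn S (Q ∪ C)) (hA : A ⊆ Q) (hrec : mutualInfo S A C = 2 * S C) :
    S A = mutualInfo S A (Q \ A) / 2 + S C ∧
      S (Q \ A) = mutualInfo S A (Q \ A) / 2 ∧
      S A - S (Q \ A) = S C := by
  have hQ : A ∪ Q \ A = Q := Finset.union_sdiff_of_subset hA
  have hdisj : Disjoint (A ∪ C) (Q \ A) :=
    Finset.disjoint_union_left.mpr
      ⟨Finset.disjoint_sdiff, (hQC.mono_left Finset.sdiff_subset).symm⟩
  rw [← hQ] at hQC hS
  have hsum : S A = S (Q \ A) + S C :=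
    hS.apply_eq_add_of_mutualInfo_eq_two_nsmul hdisj (by rw [hrec, two_nsmul, two_mul])
  have hhalf : S (Q \ A) = mutualInfo S A (Q \ A) / 2 := by
    rw [hS.mutualInfo_eq_two_nsmul_of_apply_eq_add hQC hsum, two_nsmul, add_self_div_two]
  exact ⟨hhalf ▸ hsum, hhalf, sub_eq_of_eq_add' hsum⟩

/-- for an entropy function realizing a quantum access structure `Γ`
with secret size `c`, every authorized `A ∈ Γ` with complement `Ā = Q \ A` satisfies
`S(A) = I(A : Ā)/2 + c`, `S(Ā) = I(A : Ā)/2`, and `S(A) - S(Ā) = c`. -/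
theorem entropy_complement_relations (Q : Finset ℕ) (R : ℕ) (hR : R ∉ Q)
    (Γ : Set (Finset ℕ)) (c : ℝ) (S : Finset ℕ → ℝ)
    (hsub : ∀ X ∈ Γ, X ⊆ Q)
    (hmono : ∀ X Y : Finset ℕ, X ∈ Γ → X ⊆ Y → Y ⊆ Q → Y ∈ Γ)
    (hint : ∀ X ∈ Γ, ∀ Y ∈ Γ, (X ∩ Y).Nonempty)
    (hS : EntropyFn Q R Γ c S) :
    ∀ A ∈ Γ,
      S A = (S A + S (Q \ A) - S (A ∪ (Q \ A))) / 2 + c ∧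
      S (Q \ A) = (S A + S (Q \ A) - S (A ∪ (Q \ A))) / 2 ∧
      S A - S (Q \ A) = c := by
  intro A hA
  obtain rfl := hS.ref
  exact entropy_complement_relations_general (Finset.disjoint_singleton_right.mpr hR) hS.purity
    (hsub A hA) (hS.recov A hA)
end

section
/- Let S be an entropy function realizing the access structure Γ̄^(4) on players {1,2,3,4,5} with secret size c. Then S({1,2}) + S({3,4}) ≥ S({1,2,3,4}) + 4c. -/
/-- The purified access structure `Γ̄^(4)` on the five players `{1,2,3,4,5}`:
the monotone closure of the minimal sets `{1,2}, {1,3}, {2,3,4}, {2,3,5}, {1,4,5}`. -/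
def GammaBar4 : Set (Finset ℕ) :=
  {Z | Z ⊆ ({1, 2, 3, 4, 5} : Finset ℕ) ∧
    (({1, 2} : Finset ℕ) ⊆ Z ∨ ({1, 3} : Finset ℕ) ⊆ Z ∨ ({2, 3, 4} : Finset ℕ) ⊆ Z ∨
      ({2, 3, 5} : Finset ℕ) ⊆ Z ∨ ({1, 4, 5} : Finset ℕ) ⊆ Z)}

/-!
Write `I` for mutual information and `S(X|Y)` for conditional entropy.  Since `{1}` is unauthorized
and both `{1, 2}` and `{1, 3}` are authorized, strict submodularity gives `I(12 : 3) ≥ 2c`.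
Player `4` is pivotal between the unauthorized sets `{2, 3}` and `{1, 5}`: by purity
`S(4|23) + S(4|15) = 2c`, hence `S(4|3) + S(4|5) ≥ 2c` because conditioning reduces entropy.  The
bound is the sum of these two with `S(123) = S(45) + c` and `S(1234) = S(5) + c`, again by purity.
-/

instance GammaBar4.decidableMem (Z : Finset ℕ) : Decidable (Z ∈ GammaBar4) :=
  inferInstanceAs (Decidable (_ ∧ _))

theorem inter_union_eq_of_subset_of_disjoint {α : Type*} [DecidableEq α] {W X Z : Finset α}
    (hWX : W ⊆ X) (hXZ : Disjoint X Z) : X ∩ (W ∪ Z) = W := by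
  rw [Finset.inter_union_distrib_left, Finset.inter_eq_right.mpr hWX,
    Finset.disjoint_iff_inter_eq_empty.mp hXZ, Finset.union_empty]

namespace EntropyFn

/-- The mutual information `I(X : Y)` with respect to the entropy function `S`, meaningful for
disjoint `X` and `Y`. -/
def mutualInfo (S : Finset ℕ → ℝ) (X Y : Finset ℕ) : ℝ := S X + S Y - S (X ∪ Y)

/-- The conditional entropy `S(X|Y)` of `X` given `Y`; like its quantum counterpart it may be
negative. -/
def condEntropy (S : Finset ℕ → ℝ) (X Y : Finset ℕ) : ℝ := S (Y ∪ X) - S Y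

variable {Q A B D V W X Y Z : Finset ℕ} {R : ℕ} {Γ : Set (Finset ℕ)} {c : ℝ} {S : Finset ℕ → ℝ}

theorem submod_of_subset_players (hS : EntropyFn Q R Γ c S) (hX : X ⊆ Q) (hY : Y ⊆ Q) :
    S (X ∪ Y) + S (X ∩ Y) ≤ S X + S Y :=
  hS.submod X Y (hX.trans Finset.subset_union_left) (hY.trans Finset.subset_union_left)

theorem submod_union_ref (hS : EntropyFn Q R Γ c S) (hX : X ⊆ Q) (hY : Y ⊆ Q) :
    S (X ∪ Y ∪ {R}) + S (X ∩ Y ∪ {R}) ≤ S (X ∪ {R}) + S (Y ∪ {R}) := by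
  rw [Finset.union_union_distrib_right, Finset.inter_union_distrib_right]
  exact hS.submod _ _ (Finset.union_subset_union_left hX) (Finset.union_subset_union_left hY)

theorem union_le_add (hS : EntropyFn Q R Γ c S) (hX : X ⊆ Q) (hY : Y ⊆ Q) :
    S (X ∪ Y) ≤ S X + S Y := by
  linarith [hS.submod_of_subset_players hX hY, hS.nonneg (X ∩ Y)]

theorem condEntropy_anti (hS : EntropyFn Q R Γ c S) (hA : A ⊆ Q) (hD : D ⊆ Q) (hWA : W ⊆ A)
    (hAD : Disjoint A D) : condEntropy S D A ≤ condEntropy S D W := by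
  have h := hS.submod_of_subset_players hA (Finset.union_subset (hWA.trans hA) hD)
  rw [← Finset.union_assoc, Finset.union_eq_left.mpr hWA,
    inter_union_eq_of_subset_of_disjoint hWA hAD] at h
  unfold condEntropy
  linarith

theorem union_ref_eq_sub (hS : EntropyFn Q R Γ c S) (hA : A ∈ Γ) : S (A ∪ {R}) = S A - c := by
  linarith [hS.recov A hA, hS.ref]

theorem union_ref_eq_add (hS : EntropyFn Q R Γ c S) (hAQ : A ⊆ Q) (hA : A ∉ Γ) :
    S (A ∪ {R}) = S A + c := by
  linarith [hS.secrecy A hAQ hA, hS.ref]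

theorem sub_le_union_ref (hS : EntropyFn Q R Γ c S) (hAQ : A ⊆ Q) : S A - c ≤ S (A ∪ {R}) := by
  by_cases hA : A ∈ Γ
  · exact (hS.union_ref_eq_sub hA).ge
  · linarith [hS.union_ref_eq_add hAQ hA, hS.c_pos]

theorem strict_submod (hS : EntropyFn Q R Γ c S) (hXQ : X ⊆ Q) (hYQ : Y ⊆ Q) (hX : X ∈ Γ)
    (hY : Y ∈ Γ) (hXY : X ∩ Y ∉ Γ) : S (X ∪ Y) + S (X ∩ Y) + 2 * c ≤ S X + S Y := by
  -- Adjoining `R` lowers `S X` and `S Y` by `c`, lowers `S (X ∪ Y)` by at most `c`, and raises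
  -- `S (X ∩ Y)` by `c`.
  linarith [hS.submod_union_ref hXQ hYQ, hS.union_ref_eq_sub hX, hS.union_ref_eq_sub hY,
    hS.union_ref_eq_add (Finset.inter_subset_left.trans hXQ) hXY,
    hS.sub_le_union_ref (Finset.union_subset hXQ hYQ)]

theorem two_mul_le_mutualInfo (hS : EntropyFn Q R Γ c S) (hXQ : X ⊆ Q) (hZQ : Z ⊆ Q)
    (hXZ : Disjoint X Z) (hWX : W ⊆ X) (hX : X ∈ Γ) (hWZ : W ∪ Z ∈ Γ) (hW : W ∉ Γ) :
    2 * c ≤ mutualInfo S X Z := by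
  have hWQ : W ⊆ Q := hWX.trans hXQ
  have h_union : X ∪ (W ∪ Z) = X ∪ Z := by
    rw [← Finset.union_assoc, Finset.union_eq_left.mpr hWX]
  have h_inter : X ∩ (W ∪ Z) = W := inter_union_eq_of_subset_of_disjoint hWX hXZ
  have h_strict : S (X ∪ Z) + S W + 2 * c ≤ S X + S (W ∪ Z) := by
    simpa only [h_union, h_inter] using
      hS.strict_submod hXQ (Finset.union_subset hWQ hZQ) hX hWZ (h_inter.symm ▸ hW)
  unfold mutualInfo
  linarith [hS.union_le_add hWQ hZQ]

theorem eq_compl_union_ref (hS : EntropyFn Q R Γ c S) (hR : R ∉ Q) (hAB : Disjoint A B)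
    (hQ : A ∪ B = Q) : S A = S (B ∪ {R}) := by
  subst hQ
  have hRA : R ∉ A := fun h => hR (Finset.mem_union_left B h)
  have h_compl : (A ∪ B ∪ {R}) \ A = B ∪ {R} := by
    rw [Finset.union_assoc, Finset.union_sdiff_cancel_left]
    exact Finset.disjoint_union_right.mpr ⟨hAB, Finset.disjoint_singleton_right.mpr hRA⟩
  rw [hS.purity A (Finset.subset_union_left.trans Finset.subset_union_left), h_compl]

theorem eq_compl_add (hS : EntropyFn Q R Γ c S) (hR : R ∉ Q) (hAB : Disjoint A B)
    (hQ : A ∪ B = Q) (hB : B ∉ Γ) : S A = S B + c := by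
  rw [hS.eq_compl_union_ref hR hAB hQ, hS.union_ref_eq_add (hQ ▸ Finset.subset_union_right) hB]

theorem condEntropy_add_condEntropy (hS : EntropyFn Q R Γ c S) (hR : R ∉ Q) (hAB : Disjoint A B)
    (hD : Disjoint (A ∪ B) D) (hQ : A ∪ B ∪ D = Q) (hA : A ∉ Γ) (hB : B ∉ Γ) :
    condEntropy S D A + condEntropy S D B = 2 * c := by
  obtain ⟨hAD, hBD⟩ := Finset.disjoint_union_left.mp hD
  have h_compl_B : S (A ∪ D) = S B + c :=
    hS.eq_compl_add hR (Finset.disjoint_union_left.mpr ⟨hAB, hBD.symm⟩)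
      (by rw [Finset.union_right_comm, hQ]) hB
  have h_compl_A : S (B ∪ D) = S A + c :=
    hS.eq_compl_add hR (Finset.disjoint_union_left.mpr ⟨hAB.symm, hAD.symm⟩)
      (by rw [Finset.union_right_comm, Finset.union_comm B, hQ]) hA
  unfold condEntropy
  linarith

theorem two_mul_le_condEntropy_add_condEntropy (hS : EntropyFn Q R Γ c S) (hR : R ∉ Q)
    (hAB : Disjoint A B) (hD : Disjoint (A ∪ B) D) (hQ : A ∪ B ∪ D = Q) (hA : A ∉ Γ) (hB : B ∉ Γ)
    (hWA : W ⊆ A) (hVB : V ⊆ B) : 2 * c ≤ condEntropy S D W + condEntropy S D V := by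
  obtain ⟨hAD, hBD⟩ := Finset.disjoint_union_left.mp hD
  obtain ⟨hABQ, hDQ⟩ := Finset.union_subset_iff.mp hQ.subset
  obtain ⟨hAQ, hBQ⟩ := Finset.union_subset_iff.mp hABQ
  calc
    2 * c = condEntropy S D A + condEntropy S D B :=
      (hS.condEntropy_add_condEntropy hR hAB hD hQ hA hB).symm
    _ ≤ condEntropy S D W + condEntropy S D V :=
      add_le_add (hS.condEntropy_anti hAQ hDQ hWA hAD) (hS.condEntropy_anti hBQ hDQ hVB hBD)

end EntropyFn

/-- for an entropy function realizing `Γ̄^(4)` with secret size `c`: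
`S({1,2}) + S({3,4}) ≥ S({1,2,3,4}) + 4c`. -/
theorem gammaBar4_pair_bound (R : ℕ) (hR : R ∉ ({1, 2, 3, 4, 5} : Finset ℕ))
    (c : ℝ) (S : Finset ℕ → ℝ)
    (hS : EntropyFn ({1, 2, 3, 4, 5} : Finset ℕ) R GammaBar4 c S) :
    S {1, 2} + S {3, 4} ≥ S {1, 2, 3, 4} + 4 * c := by
  have h_info : 2 * c ≤ EntropyFn.mutualInfo S {1, 2} {3} :=
    hS.two_mul_le_mutualInfo (W := {1}) (by decide) (by decide) (by decide) (by decide)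
      (by decide) (by decide) (by decide)
  have h_pivotal : 2 * c ≤ EntropyFn.condEntropy S {4} {3} + EntropyFn.condEntropy S {4} {5} :=
    hS.two_mul_le_condEntropy_add_condEntropy hR (A := {2, 3}) (B := {1, 5}) (by decide)
      (by decide) (by decide) (by decide) (by decide) (by decide) (by decide)
  have h_info_eq : EntropyFn.mutualInfo S {1, 2} {3} = S {1, 2} + S {3} - S {1, 2, 3} := rfl
  have h_cond_3 : EntropyFn.condEntropy S {4} {3} = S {3, 4} - S {3} := rfl
  have h_cond_5 : EntropyFn.condEntropy S {4} {5} = S {4, 5} - S {5} := by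
    rw [Finset.pair_comm 4 5]; rfl
  have h_123 : S {1, 2, 3} = S {4, 5} + c :=
    hS.eq_compl_add hR (by decide) (by decide) (by decide)
  have h_1234 : S {1, 2, 3, 4} = S {5} + c :=
    hS.eq_compl_add hR (by decide) (by decide) (by decide)
  linarith
end
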